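/- arXiv:1810.00920 — 2 statements merged into one kernel-verified Lean document; each statement's English description precedes it below -/
import Mathlib

section
/- Let n ≥ 2k > 0 and let F be an intersecting family of k-element subsets of [n]. Then |F| ≤ C(n-1, k-1). Moreover, if n > 2k, equality holds only if F consists of all k-sets containing some fixed element. -/
open Finset

/-!
The bound is Mathlib's `Finset.erdos_ko_rado`, transported to an arbitrary ground set `V`. For the
uniqueness of the extremal families fix `m ∈ V` and replace `m` by `i` in the members of `F`
whenever this produces new sets, for `i ∈ V`. These shifts keep `F` intersecting and of the same
size.

If no shift changes `F`, any `A, B ∈ F` with `A ∩ B = {m}` would be separated by replacing `m` in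
`A` by an element outside `A ∪ B`. So the link of `m` is intersecting, and by Pascal's rule it is
extremal in `V \ {m}`; by induction on the set size it is a star, and then so is `F`.

Otherwise some shift lowers the degree of `m`, and by induction on that degree the shifted family
is a star. If its centre is not `i`, it is also the centre of `F`. If it is `i`, every `r`-subset
`T` of `V \ {i, m}` satisfies `T ∪ {i} ∈ F` or `T ∪ {m} ∈ F`, and the first alternative passes from
`T` to all `r`-sets disjoint from it. Since the Kneser graph on `V \ {i, m}` is connected, one of
the alternatives holds for all `T`, so that `F` is a star with centre `i` or `m`.
-/

open scoped FinsetFamily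

variable {α : Type*} {V W S T : Finset α} {F : Finset (Finset α)} {k r : ℕ} {i m x : α}

theorem exists_mem_powersetCard_disjoint (h : r + #S ≤ #V) :
    ∃ T ∈ V.powersetCard r, Disjoint T S := by
  classical
  obtain ⟨T, hTV, hT⟩ := exists_subset_card_eq (s := V \ S) (n := r)
    (by have := le_card_sdiff S V; lia)
  exact ⟨T, mem_powersetCard.2 ⟨hTV.trans sdiff_subset, hT⟩, disjoint_of_subset_left hTV
    sdiff_disjoint⟩

theorem eq_powersetCard_of_exchange [DecidableEq α] (hF : F ⊆ W.powersetCard r) (hne : F.Nonempty)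
    (hex : ∀ A ∈ F, ∀ a ∈ A, ∀ b ∈ W \ A, insert b (A.erase a) ∈ F) : F = W.powersetCard r := by
  refine hF.antisymm fun T hT ↦ ?_
  obtain ⟨A, hA, hmin⟩ := exists_min_image F (fun A ↦ #(T \ A)) hne
  rw [mem_powersetCard] at hT
  have hAr : #A = #T := (mem_powersetCard.1 (hF hA)).2.trans hT.2.symm
  obtain hTA | ⟨b, hb⟩ := (T \ A).eq_empty_or_nonempty
  · rwa [eq_of_subset_of_card_le (sdiff_eq_empty_iff_subset.1 hTA) hAr.le]
  obtain ⟨a, ha⟩ : (A \ T).Nonempty := by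
    rw [← card_pos, card_sdiff_comm hAr]
    exact card_pos.2 ⟨b, hb⟩
  rw [mem_sdiff] at ha hb
  have hcloser : T \ insert b (A.erase a) ⊂ T \ A :=
    (ssubset_iff_of_subset (by grind)).2 ⟨b, by grind, by simp⟩
  exact absurd (hmin _ (hex A hA a ha.1 b (mem_sdiff.2 ⟨hT.1 hb.1, hb.2⟩)))
    (card_lt_card hcloser).not_ge

theorem eq_powersetCard_of_disjoint (hrW : 2 * r < #W) (hF : F ⊆ W.powersetCard r)
    (hne : F.Nonempty) (hdisj : ∀ A ∈ F, ∀ B ∈ W.powersetCard r, Disjoint A B → B ∈ F) :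
    F = W.powersetCard r := by
  classical
  refine eq_powersetCard_of_exchange hF hne fun A hA a ha b hb ↦ ?_
  obtain ⟨hAW, hAr⟩ := mem_powersetCard.1 (hF hA)
  rw [mem_sdiff] at hb
  -- `C` is a common neighbour of `A` and `insert b (A.erase a)` in the Kneser graph.
  obtain ⟨C, hC, hCbA⟩ := exists_mem_powersetCard_disjoint (V := W) (S := insert b A) (r := r)
    (by rw [card_insert_of_notMem hb.2]; lia)
  have hCF : C ∈ F := hdisj A hA C hC (hCbA.mono_right (subset_insert b A)).symm
  refine hdisj C hCF _ ?_ (hCbA.mono_right (insert_subset_insert b (erase_subset a A)))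
  rw [mem_powersetCard, card_insert_of_notMem (by grind), card_erase_add_one ha]
  exact ⟨insert_subset hb.1 ((erase_subset a A).trans hAW), hAr⟩

variable [DecidableEq α]

theorem card_le_choose_of_intersecting (hkV : 2 * k ≤ #V) (hF : F ⊆ V.powersetCard k)
    (hint : (F : Set (Finset α)).Intersecting) : #F ≤ (#V - 1).choose (k - 1) := by
  let f : Fin #V ↪ α := V.equivFin.symm.toEmbedding.trans (.subtype _)
  have map_f : univ.map f = V := by
    rw [← map_map, map_univ_equiv, univ_eq_attach, attach_map_val]
  let G : Finset (Finset (Fin #V)) := {B | B.map f ∈ F}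
  have mem_G {B} : B ∈ G ↔ B.map f ∈ F := by simp [G]
  have image_G : G.image (map f) = F := by
    refine Subset.antisymm (image_subset_iff.2 fun B ↦ mem_G.1) fun A hA ↦ ?_
    obtain ⟨B, -, rfl⟩ := subset_map_iff.1 (map_f ▸ (mem_powersetCard.1 (hF hA)).1)
    exact mem_image_of_mem _ (mem_G.2 hA)
  have hG : (G : Set (Finset (Fin #V))).Intersecting := fun A hA B hB hAB ↦
    hint (mem_G.1 hA) (mem_G.1 hB) ((disjoint_map f).2 hAB)
  have hGk : (G : Set (Finset (Fin #V))).Sized k := fun B hB ↦ by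
    rw [← card_map f, (mem_powersetCard.1 (hF (mem_G.1 hB))).2]
  rw [← image_G, card_image_of_injective _ (map_injective f)]
  exact Finset.erdos_ko_rado hG hGk (by lia)

theorem not_disjoint_of_forall_union_mem (hint : (F : Set (Finset α)).Intersecting)
    (hS : ∀ T ∈ W.powersetCard r, S ∪ T ∈ F) {A : Finset α} (hA : A ∈ F) (hAW : r + #A ≤ #W) :
    ¬ Disjoint S A := fun hSA ↦ by
  obtain ⟨T, hT, hTA⟩ := exists_mem_powersetCard_disjoint hAW
  exact hint (hS T hT) hA (disjoint_union_left.2 ⟨hSA, hTA⟩)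

theorem forall_mem_or_forall_mem_of_insert_mem (hrV : 2 * (r + 1) < #V)
    (hF : F ⊆ V.powersetCard (r + 1)) (hint : (F : Set (Finset α)).Intersecting)
    (him : i ≠ m)
    (hins : ∀ T ∈ (V \ {i, m}).powersetCard r, insert i T ∈ F ∨ insert m T ∈ F) :
    (∀ A ∈ F, i ∈ A) ∨ ∀ A ∈ F, m ∈ A := by
  have hW : #V ≤ #(V \ {i, m}) + 2 := by
    have := le_card_sdiff {i, m} V
    rw [card_pair him] at this
    lia
  have mem_of_forall_insert {y : α} (hy : ∀ T ∈ (V \ {i, m}).powersetCard r, insert y T ∈ F)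
      (A) (hA : A ∈ F) : y ∈ A := by
    have hAr := (mem_powersetCard.1 (hF hA)).2
    simpa using not_disjoint_of_forall_union_mem (S := {y}) hint hy hA (by lia)
  let G : Finset (Finset α) := {T ∈ (V \ {i, m}).powersetCard r | insert i T ∈ F}
  obtain hG | hG := G.eq_empty_or_nonempty
  · exact .inr (mem_of_forall_insert fun T hT ↦
      (hins T hT).resolve_left (filter_eq_empty_iff.1 hG hT))
  have hGdisj (A) (hA : A ∈ G) (B) (hB : B ∈ (V \ {i, m}).powersetCard r) (hAB : Disjoint A B) :
      B ∈ G := by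
    obtain ⟨hA, hiA⟩ := mem_filter.1 hA
    refine mem_filter.2 ⟨hB, (hins B hB).resolve_right fun hmB ↦ hint hiA hmB ?_⟩
    have := (mem_powersetCard.1 hA).1
    have := (mem_powersetCard.1 hB).1
    rw [disjoint_left] at hAB ⊢
    grind
  have hGall := eq_powersetCard_of_disjoint (by lia) (filter_subset _ _) hG hGdisj
  exact .inl (mem_of_forall_insert (filter_eq_self.1 hGall))

section Compression

variable {u v : Finset α}

theorem compression_subset_powersetCard (huV : u ⊆ V) (huv : #u = #v)
    (hF : F ⊆ V.powersetCard k) : 𝓒 u v F ⊆ V.powersetCard k := by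
  have hsized : (F : Set (Finset α)).Sized k := fun A hA ↦ (mem_powersetCard.1 (hF hA)).2
  refine fun A hA ↦ mem_powersetCard.2 ⟨?_, hsized.uvCompression huv hA⟩
  by_cases hAF : A ∈ F
  · exact (mem_powersetCard.1 (hF hAF)).1
  have := (mem_powersetCard.1 (hF (UV.sup_sdiff_mem_of_mem_compression_of_notMem hA hAF))).1
  grind

theorem intersecting_compression (hu : u.Nonempty) (hint : (F : Set (Finset α)).Intersecting) :
    (𝓒 u {m} F : Set (Finset α)).Intersecting := by
  have not_disjoint_of_notMem {A B} (hA : A ∈ 𝓒 u {m} F) (hAF : A ∉ F) (hB : B ∈ 𝓒 u {m} F)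
      (hBF : B ∈ F) : ¬ Disjoint A B := fun hAB ↦ by
    have huA : u ⊆ A := UV.le_of_mem_compression_of_notMem hA hAF
    have huB : Disjoint u B := hAB.mono_left huA
    have hA' : (A ∪ {m}) \ u ∈ F := UV.sup_sdiff_mem_of_mem_compression_of_notMem hA hAF
    have hmB : {m} ⊆ B := by
      have := hint hA' hBF
      rw [disjoint_left] at hAB this
      grind
    have hB' : (B ∪ u) \ {m} ∈ F := UV.sup_sdiff_mem_of_mem_compression hB hmB huB
    refine hint hA' hB' ?_
    rw [disjoint_left] at hAB ⊢
    grind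
  intro A hA B hB hAB
  by_cases hAF : A ∈ F <;> by_cases hBF : B ∈ F
  · exact hint hAF hBF hAB
  · exact not_disjoint_of_notMem hB hBF hA hAF hAB.symm
  · exact not_disjoint_of_notMem hA hAF hB hBF hAB
  · exact hu.ne_empty (disjoint_self_iff_empty u |>.1 <|
      hAB.mono (UV.le_of_mem_compression_of_notMem hA hAF)
        (UV.le_of_mem_compression_of_notMem hB hBF))

theorem card_memberSubfamily_compression_lt (hF : ¬ UV.IsCompressed u {m} F) :
    #((𝓒 u {m} F).memberSubfamily m) < #(F.memberSubfamily m) := by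
  obtain ⟨A, hA, hAF⟩ : ∃ A ∈ F, A ∉ 𝓒 u {m} F := by
    contrapose! hF
    exact (eq_of_subset_of_card_le hF (UV.card_compression u {m} F).le).symm
  have hmA : m ∈ A := by
    by_contra hmA
    have hfix : UV.compress u {m} A = A := if_neg (by simp [hmA])
    exact hAF (hfix ▸ UV.compress_mem_compression hA)
  refine card_lt_card ((ssubset_iff_of_subset fun B hB ↦ ?_).2 ⟨A.erase m, ?_, ?_⟩)
  · rw [mem_memberSubfamily] at hB ⊢
    exact ⟨UV.mem_of_mem_compression hB.1 (by simp) (by simp), hB.2⟩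
  · simpa [insert_erase hmA] using hA
  · simpa [insert_erase hmA] using hAF

theorem memberSubfamily_subset_powersetCard (hF : F ⊆ V.powersetCard (k + 1)) :
    F.memberSubfamily m ⊆ (V.erase m).powersetCard k := fun A hA ↦ by
  obtain ⟨hmAF, hmA⟩ := mem_memberSubfamily.1 hA
  have hmAV := mem_powersetCard.1 (hF hmAF)
  rw [card_insert_of_notMem hmA, Nat.add_right_cancel_iff] at hmAV
  exact mem_powersetCard.2 ⟨subset_erase.2 ⟨(subset_insert m A).trans hmAV.1, hmA⟩, hmAV.2⟩

theorem nonMemberSubfamily_subset_powersetCard (hF : F ⊆ V.powersetCard k) :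
    F.nonMemberSubfamily m ⊆ (V.erase m).powersetCard k := fun A hA ↦ by
  obtain ⟨hAF, hmA⟩ := mem_nonMemberSubfamily.1 hA
  have hAV := mem_powersetCard.1 (hF hAF)
  exact mem_powersetCard.2 ⟨subset_erase.2 ⟨hAV.1, hmA⟩, hAV.2⟩

theorem intersecting_memberSubfamily (hkV : 2 * k + 1 < #V) (hF : F ⊆ V.powersetCard (k + 1))
    (hint : (F : Set (Finset α)).Intersecting) (hcomp : ∀ i ∈ V, UV.IsCompressed {i} {m} F) :
    (F.memberSubfamily m : Set (Finset α)).Intersecting := fun A hA B hB hAB ↦ by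
  have hAk := (mem_powersetCard.1 (memberSubfamily_subset_powersetCard hF hA)).2
  have hBk := (mem_powersetCard.1 (memberSubfamily_subset_powersetCard hF hB)).2
  obtain ⟨hmAF, hmA⟩ := mem_memberSubfamily.1 hA
  obtain ⟨hmBF, hmB⟩ := mem_memberSubfamily.1 hB
  obtain ⟨z, hzV, hz⟩ : ∃ z ∈ V, z ∉ insert m (A ∪ B) := by
    apply exists_mem_notMem_of_card_lt_card
    have := card_insert_le m (A ∪ B)
    have := card_union_le A B
    lia
  have hzAF : (insert m A ∪ {z}) \ {m} ∈ F :=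
    UV.sup_sdiff_mem_of_mem_compression ((hcomp z hzV).symm ▸ hmAF) (by simp)
      (by grind [disjoint_singleton_left])
  refine hint hzAF hmBF ?_
  rw [disjoint_left] at hAB ⊢
  grind

end Compression

/-- The star with centre `x` among the `k`-subsets of `V`: all those containing `x`. It attains the
Erdős–Ko–Rado bound. -/
def fullStar (V : Finset α) (k : ℕ) (x : α) : Finset (Finset α) := {S ∈ V.powersetCard k | x ∈ S}

theorem mem_fullStar : S ∈ fullStar V k x ↔ S ∈ V.powersetCard k ∧ x ∈ S := mem_filter

theorem insert_mem_fullStar (hx : x ∈ V) (hT : T ∈ (V.erase x).powersetCard r) :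
    insert x T ∈ fullStar V (r + 1) x := by
  obtain ⟨hTV, hTr⟩ := mem_powersetCard.1 hT
  rw [mem_fullStar, mem_powersetCard, card_insert_of_notMem (fun hxT ↦ by simpa using hTV hxT), hTr]
  exact ⟨⟨insert_subset hx (hTV.trans (erase_subset x V)), rfl⟩, mem_insert_self x T⟩

theorem card_fullStar (hx : x ∈ V) : #(fullStar V (r + 1) x) = (#V - 1).choose r := by
  have hmember : (fullStar V (r + 1) x).memberSubfamily x = (V.erase x).powersetCard r := by
    refine (memberSubfamily_subset_powersetCard (filter_subset _ _)).antisymm fun T hT ↦ ?_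
    exact mem_memberSubfamily.2 ⟨insert_mem_fullStar hx hT,
      fun hxT ↦ by simpa using (mem_powersetCard.1 hT).1 hxT⟩
  have hnonMember : (fullStar V (r + 1) x).nonMemberSubfamily x = ∅ :=
    filter_eq_empty_iff.2 fun S hS ↦ not_not.2 (mem_fullStar.1 hS).2
  rw [← card_memberSubfamily_add_card_nonMemberSubfamily x, hmember, hnonMember,
    card_powersetCard, card_erase_of_mem hx, card_empty, add_zero]

/-- `F` attains the Erdős–Ko–Rado bound among the intersecting families of `k`-subsets of `V`.
The parameter is `r = k - 1`, which avoids truncated subtraction in the set size. -/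
structure IsExtremal (V : Finset α) (r : ℕ) (F : Finset (Finset α)) : Prop where
  subset_powersetCard : F ⊆ V.powersetCard (r + 1)
  intersecting : (F : Set (Finset α)).Intersecting
  card_eq : #F = (#V - 1).choose r

namespace IsExtremal

theorem eq_fullStar (hF : IsExtremal V r F) (hx : x ∈ V) (hxF : ∀ A ∈ F, x ∈ A) :
    F = fullStar V (r + 1) x :=
  eq_of_subset_of_card_le (fun A hA ↦ mem_fullStar.2 ⟨hF.subset_powersetCard hA, hxF A hA⟩)
    (by rw [card_fullStar hx, hF.card_eq])

theorem uvCompression (hF : IsExtremal V r F) (hi : i ∈ V) : IsExtremal V r (𝓒 {i} {m} F) := by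
  refine ⟨?_, intersecting_compression (singleton_nonempty i) hF.intersecting, ?_⟩
  · exact compression_subset_powersetCard (by simpa using hi) (by simp) hF.subset_powersetCard
  · rw [UV.card_compression, hF.card_eq]

theorem exists_eq_fullStar_of_compression (hF : IsExtremal V r F) (hrV : 2 * (r + 1) < #V)
    (hm : m ∈ V) (him : i ≠ m) (hx : x ∈ V)
    (hstar : 𝓒 {i} {m} F = fullStar V (r + 1) x) : ∃ y ∈ V, F = fullStar V (r + 1) y := by
  suffices ∃ y ∈ V, ∀ A ∈ F, y ∈ A from this.imp fun y hy ↦ ⟨hy.1, hF.eq_fullStar hy.1 hy.2⟩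
  by_cases hxi : x = i
  · subst hxi
    have hins (T) (hT : T ∈ (V \ {x, m}).powersetCard r) : insert x T ∈ F ∨ insert m T ∈ F := by
      have hTV := (mem_powersetCard.1 hT).1
      have hxT : insert x T ∈ 𝓒 {x} {m} F := hstar ▸ insert_mem_fullStar hx
        (powersetCard_mono (by grind) hT)
      refine or_iff_not_imp_left.2 fun hxTF ↦ ?_
      have hswap : (insert x T ∪ {m}) \ {x} = insert m T := by grind
      exact hswap ▸ UV.sup_sdiff_mem_of_mem_compression_of_notMem hxT hxTF
    obtain h | h := forall_mem_or_forall_mem_of_insert_mem hrV hF.subset_powersetCard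
      hF.intersecting him hins
    exacts [⟨x, hx, h⟩, ⟨m, hm, h⟩]
  · refine ⟨x, hx, fun A hA ↦ ?_⟩
    have hxA : x ∈ UV.compress {i} {m} A :=
      (mem_fullStar.1 (hstar ▸ UV.compress_mem_compression hA)).2
    grind [UV.compress]

theorem memberSubfamily (hF : IsExtremal V (r + 1) F) (hrV : 2 * (r + 2) < #V) (hm : m ∈ V)
    (hcomp : ∀ i ∈ V, UV.IsCompressed {i} {m} F) :
    IsExtremal (V.erase m) r (F.memberSubfamily m) := by
  have hWcard : #(V.erase m) = #V - 1 := card_erase_of_mem hm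
  have hsub := memberSubfamily_subset_powersetCard (m := m) hF.subset_powersetCard
  have hint := intersecting_memberSubfamily (by lia) hF.subset_powersetCard hF.intersecting hcomp
  refine ⟨hsub, hint, (card_le_choose_of_intersecting (by lia) hsub hint).antisymm ?_⟩
  have hnonMember : #(F.nonMemberSubfamily m) ≤ (#(V.erase m) - 1).choose (r + 1) :=
    card_le_choose_of_intersecting (by lia)
      (nonMemberSubfamily_subset_powersetCard hF.subset_powersetCard)
      (hF.intersecting.mono (coe_subset.2 (filter_subset (m ∉ ·) F)))
  have hpascal : (#V - 1).choose (r + 1) =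
      (#(V.erase m) - 1).choose r + (#(V.erase m) - 1).choose (r + 1) := by
    rw [hWcard, ← Nat.choose_succ_succ', Nat.sub_add_cancel (by lia)]
  have hsum := card_memberSubfamily_add_card_nonMemberSubfamily m F
  have hcard := hF.card_eq
  lia

theorem eq_fullStar_of_memberSubfamily (hF : IsExtremal V (r + 1) F) (hrV : 2 * (r + 2) < #V)
    (hm : m ∈ V) (hx : x ∈ V.erase m)
    (hstar : F.memberSubfamily m = fullStar (V.erase m) (r + 1) x) :
    F = fullStar V (r + 2) x := by
  refine hF.eq_fullStar (mem_of_mem_erase hx) fun B hB ↦ ?_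
  by_cases hmB : m ∈ B
  · have : B.erase m ∈ F.memberSubfamily m := by simpa [insert_erase hmB] using hB
    exact mem_of_mem_erase (mem_fullStar.1 (hstar ▸ this)).2
  have hins (T) (hT : T ∈ ((V.erase m).erase x).powersetCard r) : {m, x} ∪ T ∈ F := by
    rw [insert_union, singleton_union]
    exact (mem_memberSubfamily.1 (hstar ▸ insert_mem_fullStar hx hT)).1
  have hWcard : #((V.erase m).erase x) + 2 = #V := by
    rw [← card_erase_add_one hm, ← card_erase_add_one hx]
  have hBcard := (mem_powersetCard.1 (hF.subset_powersetCard hB)).2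
  have hmeet := not_disjoint_of_forall_union_mem hF.intersecting hins hB (by lia)
  simpa [hmB] using hmeet

theorem exists_eq_fullStar (hF : IsExtremal V r F) (hrV : 2 * (r + 1) < #V) :
    ∃ x ∈ V, F = fullStar V (r + 1) x := by
  induction r generalizing V F with
  | zero =>
    obtain ⟨A, rfl⟩ := card_eq_one.1 (hF.card_eq.trans (Nat.choose_zero_right _))
    obtain ⟨hAV, hA⟩ := mem_powersetCard.1 (hF.subset_powersetCard (mem_singleton_self A))
    obtain ⟨x, rfl⟩ := card_eq_one.1 hA
    have hx := singleton_subset_iff.1 hAV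
    exact ⟨x, hx, hF.eq_fullStar hx (by simp)⟩
  | succ r ih =>
    obtain ⟨m, hm⟩ : V.Nonempty := card_pos.1 (by lia)
    induction hd : #(F.memberSubfamily m) using Nat.strong_induction_on generalizing F with
    | _ d ihd =>
    by_cases hcomp : ∀ i ∈ V, UV.IsCompressed {i} {m} F
    · obtain ⟨x, hx, hstar⟩ := ih (hF.memberSubfamily hrV hm hcomp)
        (by rw [card_erase_of_mem hm]; lia)
      exact ⟨x, mem_of_mem_erase hx, hF.eq_fullStar_of_memberSubfamily hrV hm hx hstar⟩
    · push Not at hcomp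
      obtain ⟨i, hi, hiF⟩ := hcomp
      have him : i ≠ m := fun him ↦ hiF (him ▸ UV.isCompressed_self _ F)
      obtain ⟨x, hx, hstar⟩ := ihd _ (hd ▸ card_memberSubfamily_compression_lt hiF)
        (hF.uvCompression hi) rfl
      exact hF.exists_eq_fullStar_of_compression hrV hm him hx hstar

end IsExtremal

theorem erdos_ko_rado_general (hk : 0 < k) (hkV : 2 * k ≤ #V) (hF : F ⊆ V.powersetCard k)
    (hint : (F : Set (Finset α)).Intersecting) :
    #F ≤ (#V - 1).choose (k - 1) ∧
    (2 * k < #V → #F = (#V - 1).choose (k - 1) → ∃ x ∈ V, F = fullStar V k x) := by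
  refine ⟨card_le_choose_of_intersecting hkV hF hint, fun hlt hcard ↦ ?_⟩
  obtain ⟨r, rfl⟩ := Nat.exists_eq_add_one.2 hk
  exact IsExtremal.exists_eq_fullStar ⟨hF, hint, hcard⟩ hlt

/-- Erdős–Ko–Rado theorem: an intersecting family of `k`-subsets of `[n] = {1,…,n}` with
`n ≥ 2k > 0` has size at most `C(n-1, k-1)`; moreover, for `n > 2k`, equality holds only for
the family of all `k`-sets containing a fixed element. -/
theorem erdos_ko_rado (n k : ℕ) (hk : 0 < k) (hnk : 2 * k ≤ n)
    (F : Finset (Finset ℕ)) (hF : F ⊆ (Finset.Icc 1 n).powersetCard k)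
    (hint : ∀ A ∈ F, ∀ B ∈ F, (A ∩ B).Nonempty) :
    F.card ≤ (n - 1).choose (k - 1) ∧
    (2 * k < n → F.card = (n - 1).choose (k - 1) →
      ∃ i ∈ Finset.Icc 1 n,
        F = ((Finset.Icc 1 n).powersetCard k).filter (fun S => i ∈ S)) := by
  simpa [fullStar] using erdos_ko_rado_general hk (by simpa using hnk) hF
    fun A hA B hB ↦ not_disjoint_iff_nonempty_inter.2 (hint A hA B hB)
end

section
/- Let n > 2k > 0 and let F ⊆ C([n],k) be an intersecting family. If Δ(F) ≤ C(n-1,k-1) - C(n-u-1,k-1) for some integer u with 3 ≤ u ≤ k, then |F| ≤ C(n-1,k-1) + C(n-u-1,n-k-1) - C(n-u-1,k-1). -/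
open Finset

/-- The degree of an element `i` in a family `F`. -/
def deg (F : Finset (Finset ℕ)) (i : ℕ) : ℕ := (F.filter (fun S => i ∈ S)).card

/-- The maximal degree `Δ(F)` of a family `F ⊆ 2^[n]`. -/
def maxDeg (n : ℕ) (F : Finset (Finset ℕ)) : ℕ := (Finset.Icc 1 n).sup (deg F)

/-!
Write `γ i` for the number of members of `F` missing `i`. The members of `F` containing `i` and the
members missing `i` form, after deleting `i`, two cross-intersecting families, so a lower bound on
the Kneser neighbourhood of one of them bounds the other. If `F` were larger than claimed, the
degree bound would force `γ i ≥ C(n-u-1,n-k-1)` for every `i`.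

If some `γ i` is at most `C(n-3,n-k-1)`, the Kruskal-Katona theorem bounds that Kneser
neighbourhood. Otherwise `F` is compressed towards smaller elements as long as every `γ i` stays at
least `C(n-3,n-k-1)`. If the compressions end in a shifted family, its members missing the least
element pairwise share two elements, and Katona's intersecting shadow theorem applies. If the
compression replacing `j` by `i` breaks the condition, then it is `γ i` that drops. Either it drops
to a value covered by the Kruskal-Katona case, or few members of the original family miss both `i`
and `j`; then its four traces on `{i, j}`, grouped into cross-intersecting pairs, give the bound.
-/

section Binomial

lemma choose_le_choose_of_add_le {n p q : ℕ} (hpq : p ≤ q) (h : p + q ≤ n) :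
    n.choose p ≤ n.choose q := by
  have hpos : 0 < (n - p).choose (q - p) := Nat.choose_pos (by lia)
  refine Nat.le_of_mul_le_mul_right ?_ hpos
  calc n.choose p * (n - p).choose (q - p)
      = n.choose q * q.choose (q - p) := by rw [Nat.choose_symm hpq, Nat.choose_mul hpq]
    _ ≤ n.choose q * (n - p).choose (q - p) :=
        Nat.mul_le_mul_left _ (Nat.choose_le_choose _ (by lia))

lemma choose_succ_le_choose {n k : ℕ} (h : n ≤ 2 * k + 1) : n.choose (k + 1) ≤ n.choose k := by
  obtain hlt | hle := lt_or_ge n (k + 1)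
  · rw [Nat.choose_eq_zero_of_lt hlt]
    exact Nat.zero_le _
  · rw [← Nat.choose_symm hle, ← Nat.choose_symm (by lia : k ≤ n)]
    exact choose_le_choose_of_add_le (by lia) (by lia)

lemma choose_add_choose_pred_pred {n k : ℕ} (hk : 2 ≤ k) (hkn : k ≤ n) :
    n.choose k + (n - 2).choose (n - k) = 2 * (n - 1).choose (n - k) + (n - 2).choose k := by
  obtain ⟨m, rfl⟩ : ∃ m, n = m + 2 := ⟨n - 2, by lia⟩
  obtain ⟨l, rfl⟩ : ∃ l, k = l + 2 := ⟨k - 2, by lia⟩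
  have symm₁ := Nat.choose_symm_of_eq_add (show m = l + (m - l) by lia)
  have symm₂ := Nat.choose_symm_of_eq_add (show m + 1 = (l + 1) + (m - l) by lia)
  have pascal₁ := Nat.choose_succ_succ' (m + 1) (l + 1)
  have pascal₂ := Nat.choose_succ_succ' m (l + 1)
  have pascal₃ := Nat.choose_succ_succ' m l
  rw [show m + 2 - (l + 2) = m - l by lia, show m + 2 - 2 = m from rfl,
    show m + 2 - 1 = m + 1 from rfl]
  lia

/-- The number `C(n-1,k-1) + C(n-u-1,n-k-1) - C(n-u-1,k-1)` of `k`-subsets `S` of `[n]` such that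
either `1 ∈ S` and `S` meets `[2,u+1]`, or `1 ∉ S` and `S` contains `[2,u+1]`. It is the extremal
value in Frankl's theorem, as an integer so that the subtraction is not truncated. -/
def franklBound (n k u : ℕ) : ℤ :=
  (n - 1).choose (k - 1) + (n - u - 1).choose (n - k - 1) - (n - u - 1).choose (k - 1)

lemma franklBound_le_succ {n k u : ℕ} (hnk : 2 * k < n) (hu : 2 ≤ u) (huk : u + 1 ≤ k) :
    franklBound n k u ≤ franklBound n k (u + 1) := by
  have hle : (n - u - 2).choose (n - k - 2) ≤ (n - u - 2).choose (k - 2) := by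
    rw [Nat.choose_symm_of_eq_add (show n - u - 2 = (n - k - 2) + (k - u) by lia)]
    exact choose_le_choose_of_add_le (by lia) (by lia)
  have pascal₁ := Nat.choose_eq_choose_pred_add (n := n - u - 1) (k := n - k - 1) (by lia) (by lia)
  have pascal₂ := Nat.choose_eq_choose_pred_add (n := n - u - 1) (k := k - 1) (by lia) (by lia)
  simp only [Nat.sub_sub, Nat.reduceAdd] at hle pascal₁ pascal₂
  simp only [franklBound, Nat.sub_sub, Nat.add_assoc, Nat.reduceAdd]
  lia

lemma franklBound_mono {n k u v : ℕ} (hnk : 2 * k < n) (hu : 2 ≤ u) (huv : u ≤ v) (hvk : v ≤ k) :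
    franklBound n k u ≤ franklBound n k v := by
  induction v, huv using Nat.le_induction with
  | base => rfl
  | succ v huv ih => exact (ih (by lia)).trans (franklBound_le_succ hnk (by lia) hvk)

lemma franklBound_two {n k : ℕ} (hk : 2 ≤ k) (hkn : k < n) :
    franklBound n k 2 = (n - 2).choose (k - 2) + 2 * (n - 3).choose (n - k - 1) := by
  have symm := Nat.choose_symm_of_eq_add (show n - 3 = (n - k - 1) + (k - 2) by lia)
  have pascal₁ := Nat.choose_eq_choose_pred_add (n := n - 1) (k := k - 1) (by lia) (by lia)
  have pascal₂ := Nat.choose_eq_choose_pred_add (n := n - 2) (k := k - 1) (by lia) (by lia)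
  simp only [Nat.sub_sub, Nat.reduceAdd] at symm pascal₁ pascal₂
  simp only [franklBound, Nat.sub_sub, Nat.reduceAdd]
  lia

end Binomial

section Kneser

variable {α : Type*} {G S T : Finset α} {A B C : Finset (Finset α)} {a b : ℕ} {s : α}

/-- Two families are cross-intersecting if every member of the first meets every member of the
second. -/
def CrossIntersecting (A B : Finset (Finset α)) : Prop :=
  ∀ ⦃S⦄, S ∈ A → ∀ ⦃T⦄, T ∈ B → ¬Disjoint S T

lemma CrossIntersecting.symm (h : CrossIntersecting A B) : CrossIntersecting B A :=
  fun _ hS _ hT hd => h hT hS hd.symm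

lemma CrossIntersecting.mono_right (h : CrossIntersecting A C) (hBC : B ⊆ C) :
    CrossIntersecting A B :=
  fun _ hS _ hT => h hS (hBC hT)

variable [DecidableEq α]

lemma crossIntersecting_self_iff : CrossIntersecting A A ↔ (A : Set (Finset α)).Intersecting :=
  Iff.rfl

/-- The `a`-subsets of `G` disjoint from some member of `B`: the neighbourhood of `B` in the
(bipartite) Kneser graph. -/
def kneserNbhd (G : Finset α) (a : ℕ) (B : Finset (Finset α)) : Finset (Finset α) :=
  {T ∈ G.powersetCard a | ∃ S ∈ B, Disjoint S T}

lemma mem_kneserNbhd : T ∈ kneserNbhd G a B ↔ T ∈ G.powersetCard a ∧ ∃ S ∈ B, Disjoint S T :=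
  mem_filter

lemma CrossIntersecting.memberSubfamily_nonMemberSubfamily (h : CrossIntersecting A B) (s : α) :
    CrossIntersecting (A.memberSubfamily s) (B.nonMemberSubfamily s) := by
  intro S hS T hT hd
  obtain ⟨hS, -⟩ := mem_memberSubfamily.1 hS
  obtain ⟨hT, hsT⟩ := mem_nonMemberSubfamily.1 hT
  exact h hS hT (disjoint_insert_left.2 ⟨hsT, hd⟩)

lemma CrossIntersecting.card_add_card_kneserNbhd_le (h : CrossIntersecting A B)
    (hA : A ⊆ G.powersetCard a) : #A + #(kneserNbhd G a B) ≤ (#G).choose a := by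
  have hdisj : Disjoint A (kneserNbhd G a B) := disjoint_left.2 fun T hTA hTB => by
    obtain ⟨-, S, hS, hd⟩ := mem_kneserNbhd.1 hTB
    exact h hTA hS hd.symm
  rw [← card_union_of_disjoint hdisj, ← card_powersetCard]
  exact card_le_card (union_subset hA (filter_subset _ _))

lemma memberSubfamily_subset_powersetCard_s1 (hA : A ⊆ G.powersetCard (a + 1)) (s : α) :
    A.memberSubfamily s ⊆ (G.erase s).powersetCard a := by
  intro S hS
  obtain ⟨hS, hsS⟩ := mem_memberSubfamily.1 hS
  obtain ⟨hSG, hSc⟩ := mem_powersetCard.1 (hA hS)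
  rw [card_insert_of_notMem hsS] at hSc
  exact mem_powersetCard.2
    ⟨subset_erase.2 ⟨(subset_insert s S).trans hSG, hsS⟩, Nat.succ_injective hSc⟩

lemma nonMemberSubfamily_subset_powersetCard_s1 (hA : A ⊆ G.powersetCard a) (s : α) :
    A.nonMemberSubfamily s ⊆ (G.erase s).powersetCard a := by
  intro S hS
  obtain ⟨hS, hsS⟩ := mem_nonMemberSubfamily.1 hS
  obtain ⟨hSG, hSc⟩ := mem_powersetCard.1 (hA hS)
  exact mem_powersetCard.2 ⟨subset_erase.2 ⟨hSG, hsS⟩, hSc⟩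

lemma card_powersetCard_filter_disjoint (hS : S ⊆ G) :
    #{T ∈ G.powersetCard a | Disjoint S T} = (#G - #S).choose a := by
  rw [← card_sdiff_of_subset hS, ← card_powersetCard]
  congr 1
  ext T
  simp only [mem_filter, mem_powersetCard, subset_sdiff, disjoint_comm, and_right_comm]

lemma card_mul_choose_le_card_kneserNbhd_mul_choose (hB : B ⊆ G.powersetCard b) :
    #B * (#G - b).choose a ≤ #(kneserNbhd G a B) * (#G - a).choose b := by
  refine card_mul_le_card_mul Disjoint (fun S hS => ?_) fun T hT => ?_
  · obtain ⟨hSG, rfl⟩ := mem_powersetCard.1 (hB hS)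
    rw [← card_powersetCard_filter_disjoint hSG]
    refine card_le_card fun T hT => ?_
    obtain ⟨hT, hd⟩ := mem_filter.1 hT
    exact (mem_bipartiteAbove _).2 ⟨mem_kneserNbhd.2 ⟨hT, S, hS, hd⟩, hd⟩
  · obtain ⟨hTG, rfl⟩ := mem_powersetCard.1 (mem_kneserNbhd.1 hT).1
    rw [← card_powersetCard_filter_disjoint hTG]
    refine card_le_card fun S hS => ?_
    obtain ⟨hS, hd⟩ := (mem_bipartiteBelow _).1 hS
    exact mem_filter.2 ⟨hB hS, hd.symm⟩

lemma injOn_sdiff_powersetCard (G : Finset α) (a : ℕ) :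
    Set.InjOn (G \ ·) (G.powersetCard a : Set (Finset α)) := by
  intro S hS T hT (h : G \ S = G \ T)
  rw [← Finset.sdiff_sdiff_eq_self (mem_powersetCard.1 hS).1, h,
    Finset.sdiff_sdiff_eq_self (mem_powersetCard.1 hT).1]

end Kneser

section Shadow

open scoped FinsetFamily

variable {α : Type*} [DecidableEq α] {X : Finset α} {C D : Finset (Finset α)} {i r : ℕ} {z : α}

lemma card_le_card_shadow_iterate (hD : D ⊆ X.powersetCard r) (hir : i ≤ r)
    (hX : #X + i ≤ 2 * r) : #D ≤ #(∂^[i] D) := by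
  obtain rfl | ⟨S, hS⟩ := D.eq_empty_or_nonempty
  · simp only [card_empty, Nat.zero_le]
  have hrX : r ≤ #X := by
    obtain ⟨hSX, rfl⟩ := mem_powersetCard.1 (hD hS)
    exact card_le_card hSX
  have hcompl : D.image (X \ ·) ⊆ X.powersetCard (#X - r) := by
    intro T hT
    obtain ⟨S, hS, rfl⟩ := mem_image.1 hT
    obtain ⟨hSX, rfl⟩ := mem_powersetCard.1 (hD hS)
    exact mem_powersetCard.2 ⟨sdiff_subset, card_sdiff_of_subset hSX⟩
  have hnbhd : kneserNbhd X (r - i) (D.image (X \ ·)) ⊆ ∂^[i] D := by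
    intro T hT
    obtain ⟨hT, U, hU, hd⟩ := mem_kneserNbhd.1 hT
    obtain ⟨hTX, hTc⟩ := mem_powersetCard.1 hT
    obtain ⟨S, hS, rfl⟩ := mem_image.1 hU
    have hTS : T ⊆ S := fun x hx => by
      by_contra hxS
      exact disjoint_left.1 hd (mem_sdiff.2 ⟨hTX hx, hxS⟩) hx
    refine mem_shadow_iterate_iff_exists_sdiff.2 ⟨S, hS, hTS, ?_⟩
    rw [card_sdiff_of_subset hTS, (mem_powersetCard.1 (hD hS)).2, hTc]
    lia
  have hcount := card_mul_choose_le_card_kneserNbhd_mul_choose (a := r - i) hcompl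
  rw [card_image_of_injOn ((injOn_sdiff_powersetCard X r).mono hD), Nat.sub_sub_self hrX] at hcount
  have hchoose : (#X - (r - i)).choose (#X - r) ≤ r.choose (r - i) := by
    rw [Nat.choose_symm_of_eq_add (show #X - (r - i) = (#X - r) + i by lia), Nat.choose_symm hir]
    exact Nat.choose_le_choose _ (by lia)
  have hpos : 0 < r.choose (r - i) := Nat.choose_pos (Nat.sub_le r i)
  exact (Nat.le_of_mul_le_mul_right (hcount.trans (Nat.mul_le_mul_left _ hchoose)) hpos).trans
    (card_le_card hnbhd)

lemma card_shadow_iterate_memberSubfamily_le (i : ℕ) (C : Finset (Finset α)) (z : α) :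
    #(∂^[i] (C.memberSubfamily z)) ≤ #((∂^[i] C).memberSubfamily z) := by
  refine card_le_card fun T hT => ?_
  obtain ⟨S, hS, hTS, hc⟩ := mem_shadow_iterate_iff_exists_sdiff.1 hT
  obtain ⟨hS, hzS⟩ := mem_memberSubfamily.1 hS
  refine mem_memberSubfamily.2 ⟨mem_shadow_iterate_iff_exists_sdiff.2
    ⟨insert z S, hS, insert_subset_insert z hTS, ?_⟩, fun hzT => hzS (hTS hzT)⟩
  rw [insert_sdiff_insert, sdiff_insert_of_notMem hzS, hc]

lemma powersetCard_subset_shadow_iterate (hC : X.powersetCard r ⊆ C) (hrX : r ≤ #X) (hir : i ≤ r) :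
    X.powersetCard (r - i) ⊆ ∂^[i] C := by
  intro T hT
  obtain ⟨hTX, hTc⟩ := mem_powersetCard.1 hT
  obtain ⟨S, hTS, hSX, hSc⟩ := exists_subsuperset_card_eq hTX (by lia : #T ≤ r) hrX
  refine mem_shadow_iterate_iff_exists_sdiff.2
    ⟨S, hC (mem_powersetCard.2 ⟨hSX, hSc⟩), hTS, ?_⟩
  rw [card_sdiff_of_subset hTS, hSc, hTc]
  lia

lemma card_add_choose_le_card_shadow_iterate (hz : z ∉ X) (hXC : X.powersetCard r ⊆ C)
    (hCX : C ⊆ (insert z X).powersetCard r) (hrX : r ≤ #X) (hir : i < r)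
    (hX : #X + i + 2 ≤ 2 * r) :
    #C + (#X).choose (r - i) ≤ #(∂^[i] C) + (#X).choose r := by
  obtain ⟨q, rfl⟩ : ∃ q, r = q + 1 := ⟨r - 1, by lia⟩
  have hmem : C.memberSubfamily z ⊆ X.powersetCard q := by
    simpa only [erase_insert hz] using memberSubfamily_subset_powersetCard_s1 hCX z
  have hnonMem : #(C.nonMemberSubfamily z) ≤ (#X).choose (q + 1) := by
    rw [← card_powersetCard]
    simpa only [erase_insert hz] using card_le_card (nonMemberSubfamily_subset_powersetCard_s1 hCX z)
  have hshadowMem := (card_le_card_shadow_iterate hmem (by lia) (by lia)).trans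
    (card_shadow_iterate_memberSubfamily_le i C z)
  have hshadowNonMem : (#X).choose (q + 1 - i) ≤ #((∂^[i] C).nonMemberSubfamily z) := by
    rw [← card_powersetCard]
    refine card_le_card fun T hT => mem_nonMemberSubfamily.2
      ⟨powersetCard_subset_shadow_iterate hXC hrX hir.le hT, fun hzT => hz ?_⟩
    exact (mem_powersetCard.1 hT).1 hzT
  have hsplit := card_memberSubfamily_add_card_nonMemberSubfamily z C
  have hsplitShadow := card_memberSubfamily_add_card_nonMemberSubfamily z (∂^[i] C)
  lia

end Shadow

section KruskalKatona

open scoped FinsetFamily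
open Colex

variable {α : Type*} [LinearOrder α] {X : Finset α} {i r x : ℕ}

lemma exists_isInitSeg_card_eq [Fintype α] {m : ℕ} (hm : m ≤ (Fintype.card α).choose r) :
    ∃ C : Finset (Finset α), IsInitSeg C r ∧ #C = m := by
  induction hm using Nat.decreasingInduction with
  | self =>
    refine ⟨univ.powersetCard r, ⟨Set.sized_powersetCard _ _, fun S T _ hT => ?_⟩, ?_⟩
    · exact mem_powersetCard_univ.2 hT.2
    · rw [card_powersetCard, card_univ]
  | of_succ m _ ih =>
    obtain ⟨C, hC, hCm⟩ := ih
    obtain ⟨M, hM, hmax⟩ := exists_max_image C toColex (card_pos.1 (by lia))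
    refine ⟨C.erase M, ⟨fun S hS => hC.1 (mem_of_mem_erase hS), fun S T hS hT => ?_⟩, ?_⟩
    · refine mem_erase.2 ⟨?_, hC.2 (mem_of_mem_erase hS) hT⟩
      rintro rfl
      exact (hmax S (mem_of_mem_erase hS)).not_gt hT.1
    · rw [card_erase_of_mem hM, hCm, Nat.add_sub_cancel]

lemma isInitSeg_powersetCard_of_isLowerSet (hX : IsLowerSet (X : Set α)) (r : ℕ) :
    IsInitSeg (X.powersetCard r) r := by
  refine ⟨Set.sized_powersetCard _ _, fun S T hS ⟨hlt, hTc⟩ => ?_⟩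
  have hSX := (mem_powersetCard.1 hS).1
  refine mem_powersetCard.2 ⟨fun t ht => ?_, hTc⟩
  by_cases htS : t ∈ S
  · exact hSX htS
  · obtain ⟨y, hyS, -, hty⟩ := toColex_le_toColex.1 hlt.le ht htS
    exact hX hty (hSX hyS)

lemma subset_of_isInitSeg_of_card_le [Finite α] {C D : Finset (Finset α)} (hC : IsInitSeg C r)
    (hD : IsInitSeg D r) (hCD : #C ≤ #D) : C ⊆ D := by
  cases nonempty_fintype α
  obtain h | h := hC.total hD
  · exact h
  · exact (eq_of_subset_of_card_le h hCD).ge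

variable {N : ℕ} {A : Finset (Finset (Fin N))}

lemma isLowerSet_filter_val_lt (N x : ℕ) :
    IsLowerSet (({j | (j : ℕ) < x} : Finset (Fin N)) : Set (Fin N)) :=
  fun _ _ hba ha => mem_coe.2 <| mem_filter.2
    ⟨mem_univ _, lt_of_le_of_lt (Fin.le_def.1 hba) (mem_filter.1 (mem_coe.1 ha)).2⟩

lemma filter_val_lt_succ (hx : x < N) :
    univ.filter (fun j : Fin N => (j : ℕ) < x + 1) =
      insert ⟨x, hx⟩ (univ.filter fun j : Fin N => (j : ℕ) < x) := by
  ext j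
  simp only [mem_insert, mem_filter, mem_univ, true_and, Fin.ext_iff]
  lia

lemma isInitSeg_subset_powersetCard_filter_val_lt {C : Finset (Finset (Fin N))}
    (hC : IsInitSeg C r) (hx : x ≤ N) (hCx : #C ≤ x.choose r) :
    C ⊆ powersetCard r {j | (j : ℕ) < x} := by
  refine subset_of_isInitSeg_of_card_le hC
    (isInitSeg_powersetCard_of_isLowerSet (isLowerSet_filter_val_lt N x) r) ?_
  rwa [card_powersetCard, Fin.card_filter_val_lt, min_eq_right hx]

lemma powersetCard_filter_val_lt_subset_isInitSeg {C : Finset (Finset (Fin N))}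
    (hC : IsInitSeg C r) (hx : x ≤ N) (hxC : x.choose r ≤ #C) :
    powersetCard r {j : Fin N | (j : ℕ) < x} ⊆ C := by
  refine subset_of_isInitSeg_of_card_le
    (isInitSeg_powersetCard_of_isLowerSet (isLowerSet_filter_val_lt N x) r) hC ?_
  rwa [card_powersetCard, Fin.card_filter_val_lt, min_eq_right hx]

lemma exists_isInitSeg_card_shadow_iterate_le (hA : (A : Set (Finset (Fin N))).Sized r) (i : ℕ) :
    ∃ C : Finset (Finset (Fin N)), IsInitSeg C r ∧ #C = #A ∧ #(∂^[i] C) ≤ #(∂^[i] A) := by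
  obtain ⟨C, hC, hCA⟩ := exists_isInitSeg_card_eq hA.card_le
  exact ⟨C, hC, hCA, iterated_kk hA hCA.le hC⟩

lemma card_le_card_shadow_iterate_of_card_le_choose (hA : (A : Set (Finset (Fin N))).Sized r)
    (hx : x ≤ N) (hAx : #A ≤ x.choose r) (hir : i ≤ r) (hxi : x + i ≤ 2 * r) :
    #A ≤ #(∂^[i] A) := by
  obtain ⟨C, hC, hCA, hle⟩ := exists_isInitSeg_card_shadow_iterate_le hA i
  rw [← hCA] at hAx ⊢
  refine (card_le_card_shadow_iterate
    (isInitSeg_subset_powersetCard_filter_val_lt hC hx hAx) hir ?_).trans hle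
  rwa [Fin.card_filter_val_lt, min_eq_right hx]

lemma card_add_choose_le_card_shadow_iterate_of_choose_le_card
    (hA : (A : Set (Finset (Fin N))).Sized r) (hx : x + 1 ≤ N) (hxA : x.choose r ≤ #A)
    (hAx : #A ≤ (x + 1).choose r) (hrx : r ≤ x) (hir : i < r) (hxi : x + i + 2 ≤ 2 * r) :
    #A + x.choose (r - i) ≤ #(∂^[i] A) + x.choose r := by
  obtain ⟨C, hC, hCA, hle⟩ := exists_isInitSeg_card_shadow_iterate_le hA i
  rw [← hCA] at hAx hxA ⊢
  have hcard : #{j : Fin N | (j : ℕ) < x} = x := by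
    rw [Fin.card_filter_val_lt, min_eq_right (by lia)]
  have hCsucc := isInitSeg_subset_powersetCard_filter_val_lt hC hx hAx
  rw [filter_val_lt_succ hx] at hCsucc
  have hnotMem : (⟨x, hx⟩ : Fin N) ∉ univ.filter fun j : Fin N => (j : ℕ) < x :=
    fun h => lt_irrefl x (mem_filter.1 h).2
  have hbound := card_add_choose_le_card_shadow_iterate (i := i) hnotMem
    (powersetCard_filter_val_lt_subset_isInitSeg hC (by lia) hxA) hCsucc (by lia) hir (by lia)
  rw [hcard] at hbound
  lia

end KruskalKatona

section CrossIntersecting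

open scoped FinsetFamily

variable {α : Type*} {G : Finset α} {A B : Finset (Finset α)} {a b x : ℕ}

lemma exists_sized_card_shadow_iterate_le_card_kneserNbhd [DecidableEq α]
    (hB : B ⊆ G.powersetCard b) (hab : a + b ≤ #G) :
    ∃ A : Finset (Finset (Fin #G)), (A : Set (Finset (Fin #G))).Sized (#G - b) ∧ #A = #B ∧
      #(∂^[#G - b - a] A) ≤ #(kneserNbhd G a B) := by
  let f : Fin #G ↪ α := G.equivFin.symm.toEmbedding.trans (Function.Embedding.subtype _)
  have hmap (S : Finset α) : ({x | f x ∉ S} : Finset (Fin #G)).map f = G \ S := by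
    ext y
    simp only [mem_map, mem_filter, mem_univ, true_and, mem_sdiff]
    refine ⟨?_, fun ⟨hy, hyS⟩ => ?_⟩
    · rintro ⟨x, hx, rfl⟩
      exact ⟨(G.equivFin.symm x).2, hx⟩
    · obtain ⟨x, hx⟩ := G.equivFin.symm.surjective ⟨y, hy⟩
      have hfx : f x = y := congr_arg Subtype.val hx
      exact ⟨x, hfx ▸ hyS, hfx⟩
  have hcard {S : Finset α} (hS : S ∈ B) : #{x : Fin #G | f x ∉ S} = #G - b := by
    obtain ⟨hSG, rfl⟩ := mem_powersetCard.1 (hB hS)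
    rw [← card_map f, hmap, card_sdiff_of_subset hSG]
  refine ⟨B.image fun S => ({x | f x ∉ S} : Finset (Fin #G)), ?_, ?_, ?_⟩
  · intro U hU
    obtain ⟨S, hS, rfl⟩ := mem_image.1 hU
    exact hcard hS
  · refine card_image_of_injOn fun S hS T hT h => injOn_sdiff_powersetCard G b (hB hS) (hB hT) ?_
    simpa only [hmap] using congr_arg (map f) h
  · rw [← card_map (mapEmbedding f).toEmbedding]
    refine card_le_card fun T hT => ?_
    obtain ⟨T, hTA, rfl⟩ := mem_map.1 hT
    obtain ⟨U, hU, hTU, hc⟩ := mem_shadow_iterate_iff_exists_sdiff.1 hTA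
    obtain ⟨S, hS, rfl⟩ := mem_image.1 hU
    have hTS : T.map f ⊆ G \ S := hmap S ▸ map_subset_map.2 hTU
    rw [card_sdiff_of_subset hTU, hcard hS] at hc
    have hTc := card_le_card hTU
    rw [hcard hS] at hTc
    refine mem_kneserNbhd.2 ⟨mem_powersetCard.2 ⟨hTS.trans sdiff_subset, ?_⟩, S, hS, ?_⟩
    · rw [RelEmbedding.coe_toEmbedding, mapEmbedding_apply, card_map]
      lia
    · exact (disjoint_of_subset_left hTS sdiff_disjoint).symm

lemma CrossIntersecting.card_add_card_le (h : CrossIntersecting A B)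
    (hA : A ⊆ G.powersetCard a) (hB : B ⊆ G.powersetCard b) (hab : a + b ≤ #G) (hx : x ≤ #G)
    (hxb : x + b ≤ a + #G) (hBx : #B ≤ x.choose (#G - b)) : #A + #B ≤ (#G).choose a := by
  classical
  obtain ⟨C, hC, hCB, hle⟩ := exists_sized_card_shadow_iterate_le_card_kneserNbhd hB hab
  have hshadow := card_le_card_shadow_iterate_of_card_le_choose (i := #G - b - a) hC hx
    (by lia) (by lia) (by lia)
  have hnbhd := h.card_add_card_kneserNbhd_le hA
  lia

lemma CrossIntersecting.card_add_card_add_choose_le (h : CrossIntersecting A B)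
    (hA : A ⊆ G.powersetCard a) (hB : B ⊆ G.powersetCard b) (hab : a + b ≤ #G) (ha : 1 ≤ a)
    (hbx : #G ≤ x + b) (hx : x + 1 ≤ #G) (hxb : x + b + 2 ≤ a + #G)
    (hxB : x.choose (#G - b) ≤ #B) (hBx : #B ≤ (x + 1).choose (#G - b)) :
    #A + #B + x.choose a ≤ (#G).choose a + x.choose (#G - b) := by
  classical
  obtain ⟨C, hC, hCB, hle⟩ := exists_sized_card_shadow_iterate_le_card_kneserNbhd hB hab
  have hshadow := card_add_choose_le_card_shadow_iterate_of_choose_le_card (i := #G - b - a) hC hx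
    (by lia) (by lia) (by lia) (by lia) (by lia)
  rw [show #G - b - (#G - b - a) = a by lia] at hshadow
  have hnbhd := h.card_add_card_kneserNbhd_le hA
  lia

lemma CrossIntersecting.card_add_card_le_two_mul_of_card_le (h : CrossIntersecting A B)
    (hA : A ⊆ G.powersetCard b) (hB : B ⊆ G.powersetCard b) (hb : 2 ≤ b) (hbG : 2 * b ≤ #G)
    (hlower : (#G - 2).choose (#G - b) ≤ #B) (hupper : #B ≤ (#G - 1).choose (#G - b)) :
    #A + #B ≤ 2 * (#G - 1).choose (#G - b) := by
  have hsucc : #G - 2 + 1 = #G - 1 := by lia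
  have hbound := h.card_add_card_add_choose_le (x := #G - 2) hA hB (by lia) (by lia) (by lia)
    (by lia) (by lia) hlower (hsucc ▸ hupper)
  have hident := choose_add_choose_pred_pred hb (by lia : b ≤ #G)
  lia

lemma CrossIntersecting.card_add_card_le_two_mul (h : CrossIntersecting A B)
    (hA : A ⊆ G.powersetCard b) (hB : B ⊆ G.powersetCard b) (hb : 2 ≤ b) (hbG : 2 * b ≤ #G)
    (hAlower : (#G - 2).choose (#G - b) ≤ #A) (hBlower : (#G - 2).choose (#G - b) ≤ #B) :
    #A + #B ≤ 2 * (#G - 1).choose (#G - b) := by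
  obtain hBupper | hBupper := le_total #B ((#G - 1).choose (#G - b))
  · exact h.card_add_card_le_two_mul_of_card_le hA hB hb hbG hBlower hBupper
  -- If `B` is too large, a subfamily of the critical size already forces `A` to be small.
  obtain ⟨B', hB', hBc⟩ := exists_subset_card_eq hBupper
  have hA' := (h.mono_right hB').card_add_card_le_two_mul_of_card_le hA (hB'.trans hB) hb hbG
    (hBc ▸ Nat.choose_le_choose _ (by lia)) hBc.le
  rw [add_comm]
  exact h.symm.card_add_card_le_two_mul_of_card_le hB hA hb hbG hAlower (by lia)

end CrossIntersecting

section Link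

variable {α : Type*} [DecidableEq α] {G : Finset α} {F : Finset (Finset α)} {k u : ℕ} {i j : α}

lemma card_le_franklBound_of_mem_Icc (hF : F ⊆ G.powersetCard k)
    (hint : (F : Set (Finset α)).Intersecting) (hi : i ∈ G) (hkG : 2 * k < #G) (hu : 3 ≤ u)
    (huk : u ≤ k) (hlower : (#G - u - 1).choose (#G - k - 1) ≤ #(F.nonMemberSubfamily i))
    (hupper : #(F.nonMemberSubfamily i) ≤ (#G - u).choose (#G - k - 1)) :
    (#F : ℤ) ≤ franklBound (#G) k u := by
  obtain ⟨l, rfl⟩ : ∃ l, k = l + 1 := ⟨k - 1, by lia⟩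
  have hsplit := card_memberSubfamily_add_card_nonMemberSubfamily i F
  have hcross := (crossIntersecting_self_iff.2 hint).memberSubfamily_nonMemberSubfamily i
  have hbound := hcross.card_add_card_add_choose_le (x := #G - u - 1)
    (memberSubfamily_subset_powersetCard_s1 hF i) (nonMemberSubfamily_subset_powersetCard_s1 hF i)
  rw [card_erase_of_mem hi, Nat.sub_right_comm (#G) 1 (l + 1),
    show #G - u - 1 + 1 = #G - u by lia] at hbound
  specialize hbound (by lia) (by lia) (by lia) (by lia) (by lia) hlower hupper
  rw [franklBound, Nat.add_sub_cancel]
  lia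

lemma card_le_franklBound_of_card_nonMemberSubfamily_le (hF : F ⊆ G.powersetCard k)
    (hint : (F : Set (Finset α)).Intersecting) (hi : i ∈ G) (hkG : 2 * k < #G) (hu : 3 ≤ u)
    (huk : u ≤ k) (hlower : (#G - u - 1).choose (#G - k - 1) ≤ #(F.nonMemberSubfamily i))
    (hupper : #(F.nonMemberSubfamily i) ≤ (#G - 3).choose (#G - k - 1)) :
    (#F : ℤ) ≤ franklBound (#G) k u := by
  induction u, hu using Nat.le_induction with
  | base => exact card_le_franklBound_of_mem_Icc hF hint hi hkG le_rfl huk hlower hupper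
  | succ u hu ih =>
    by_cases hlt : (#G - u - 1).choose (#G - k - 1) ≤ #(F.nonMemberSubfamily i)
    · exact (ih (by lia) hlt).trans (franklBound_le_succ hkG (by lia) huk)
    · exact card_le_franklBound_of_mem_Icc hF hint hi hkG (by lia) huk hlower (not_le.1 hlt).le

lemma nonMemberSubfamily_memberSubfamily_comm (F : Finset (Finset α)) (hij : i ≠ j) :
    (F.nonMemberSubfamily i).memberSubfamily j = (F.memberSubfamily j).nonMemberSubfamily i := by
  ext S
  simp only [mem_nonMemberSubfamily, mem_memberSubfamily, mem_insert, hij, false_or]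
  tauto

lemma nonMemberSubfamily_comm (F : Finset (Finset α)) (i j : α) :
    (F.nonMemberSubfamily i).nonMemberSubfamily j =
      (F.nonMemberSubfamily j).nonMemberSubfamily i := by
  simp only [nonMemberSubfamily, filter_filter, and_comm]

lemma card_le_franklBound_two_of_card_nonMember_nonMember_le (hF : F ⊆ G.powersetCard k)
    (hint : (F : Set (Finset α)).Intersecting) (hi : i ∈ G)
    (hj : j ∈ G) (hij : i ≠ j) (hk : 3 ≤ k) (hkG : 2 * k < #G)
    (hlower_i : (#G - 3).choose (#G - k - 1) ≤ #(F.nonMemberSubfamily i))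
    (hlower_j : (#G - 3).choose (#G - k - 1) ≤ #(F.nonMemberSubfamily j))
    (hupper : #((F.nonMemberSubfamily j).nonMemberSubfamily i) ≤ (#G - 4).choose (#G - k - 1)) :
    (#F : ℤ) ≤ franklBound (#G) k 2 := by
  obtain ⟨l, rfl⟩ : ∃ l, k = l + 2 := ⟨k - 2, by lia⟩
  have hcard : #((G.erase j).erase i) = #G - 2 := by
    rw [card_erase_of_mem (mem_erase.2 ⟨hij, hi⟩), card_erase_of_mem hj, Nat.sub_sub]
  have hcross := (crossIntersecting_self_iff.2 hint).memberSubfamily_nonMemberSubfamily j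
  have hmem := memberSubfamily_subset_powersetCard_s1 hF j
  have hnonMem := nonMemberSubfamily_subset_powersetCard_s1 hF j
  have hsplit := card_memberSubfamily_add_card_nonMemberSubfamily j F
  have hsplitMem := card_memberSubfamily_add_card_nonMemberSubfamily i (F.memberSubfamily j)
  have hsplitNonMem := card_memberSubfamily_add_card_nonMemberSubfamily i (F.nonMemberSubfamily j)
  have hsplit_i := card_memberSubfamily_add_card_nonMemberSubfamily j (F.nonMemberSubfamily i)
  rw [nonMemberSubfamily_memberSubfamily_comm F hij, nonMemberSubfamily_comm F i j] at hsplit_i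
  have hle : (#G - 4).choose (#G - (l + 2) - 1) ≤ (#G - 4).choose (#G - (l + 2) - 2) := by
    rw [show #G - (l + 2) - 1 = #G - (l + 2) - 2 + 1 by lia]
    exact choose_succ_le_choose (by lia)
  have pascal := Nat.choose_eq_choose_pred_add (n := #G - 3) (k := #G - (l + 2) - 1)
    (by lia) (by lia)
  simp only [Nat.sub_sub, Nat.reduceAdd, Nat.add_assoc] at *
  have hboth := (hcross.memberSubfamily_nonMemberSubfamily i).card_add_card_le (x := #G - 4)
    (memberSubfamily_subset_powersetCard_s1 hmem i) (nonMemberSubfamily_subset_powersetCard_s1 hnonMem i)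
  have hone := (hcross.symm.memberSubfamily_nonMemberSubfamily i).card_add_card_le_two_mul
    (memberSubfamily_subset_powersetCard_s1 hnonMem i) (nonMemberSubfamily_subset_powersetCard_s1 hmem i)
  rw [hcard] at hboth hone
  simp only [Nat.sub_sub, Nat.reduceAdd, show 2 + (l + 1) = l + 3 by lia,
    show 2 + (l + 2) = l + 4 by lia] at hboth hone
  specialize hboth (by lia) (by lia) (by lia) (by lia)
  specialize hone (by lia) (by lia) (by lia) (by lia)
  rw [franklBound_two (by lia) (by lia), Nat.add_sub_cancel]
  simp only [Nat.sub_sub, Nat.add_assoc, Nat.reduceAdd]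
  lia

end Link

section Shifted

variable {α : Type*}

/-- Any two members (possibly equal) share at least `t` elements. -/
def TIntersecting [DecidableEq α] (t : ℕ) (F : Finset (Finset α)) : Prop :=
  ∀ ⦃S⦄, S ∈ F → ∀ ⦃T⦄, T ∈ F → t ≤ #(S ∩ T)

/-- A family is shifted over `G` if replacing an element of a member by a smaller element of `G`
never leaves the family. -/
def IsShifted [LinearOrder α] (G : Finset α) (F : Finset (Finset α)) : Prop :=
  ∀ ⦃S⦄, S ∈ F → ∀ ⦃j⦄, j ∈ S → ∀ ⦃i⦄, i ∈ G → i ∉ S → i < j → insert i (S.erase j) ∈ F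

lemma tIntersecting_one_of_intersecting [DecidableEq α] {F : Finset (Finset α)}
    (hF : (F : Set (Finset α)).Intersecting) : TIntersecting 1 F :=
  fun _ hS _ hT => card_pos.2 (not_disjoint_iff_nonempty_inter.1 (hF hS hT))

lemma TIntersecting.memberSubfamily [DecidableEq α] {t : ℕ} {F : Finset (Finset α)}
    (hF : TIntersecting (t + 1) F) (s : α) : TIntersecting t (F.memberSubfamily s) := by
  intro S hS T hT
  obtain ⟨hS, hsS⟩ := mem_memberSubfamily.1 hS
  obtain ⟨hT, -⟩ := mem_memberSubfamily.1 hT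
  have hcard := hF hS hT
  rw [← insert_inter_distrib, card_insert_of_notMem fun h => hsS (mem_inter.1 h).1] at hcard
  exact Nat.le_of_succ_le_succ hcard

lemma card_kneserNbhd_add_card_kneserNbhd_le [DecidableEq α] {G : Finset α} {s : α} (hs : s ∈ G)
    (a : ℕ) (R : Finset (Finset α)) :
    #(kneserNbhd (G.erase s) (a + 1) (R.memberSubfamily s)) +
      #(kneserNbhd (G.erase s) a (R.nonMemberSubfamily s)) ≤ #(kneserNbhd G (a + 1) R) := by
  rw [← card_memberSubfamily_add_card_nonMemberSubfamily s (kneserNbhd G (a + 1) R), add_comm]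
  refine add_le_add (card_le_card fun T hT => ?_) (card_le_card fun T hT => ?_)
  · obtain ⟨hT, S, hS, hd⟩ := mem_kneserNbhd.1 hT
    obtain ⟨hTG, rfl⟩ := mem_powersetCard.1 hT
    obtain ⟨hS, hsS⟩ := mem_nonMemberSubfamily.1 hS
    have hsT : s ∉ T := fun h => notMem_erase s G (hTG h)
    refine mem_memberSubfamily.2 ⟨mem_kneserNbhd.2 ⟨mem_powersetCard.2
      ⟨insert_subset hs (hTG.trans (erase_subset s G)), card_insert_of_notMem hsT⟩,
      S, hS, disjoint_insert_right.2 ⟨hsS, hd⟩⟩, hsT⟩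
  · obtain ⟨hT, S, hS, hd⟩ := mem_kneserNbhd.1 hT
    obtain ⟨hTG, hTc⟩ := mem_powersetCard.1 hT
    obtain ⟨hS, -⟩ := mem_memberSubfamily.1 hS
    have hsT : s ∉ T := fun h => notMem_erase s G (hTG h)
    exact mem_nonMemberSubfamily.2 ⟨mem_kneserNbhd.2 ⟨mem_powersetCard.2
      ⟨hTG.trans (erase_subset s G), hTc⟩, _, hS, disjoint_insert_left.2 ⟨hsT, hd⟩⟩, hsT⟩

lemma mul_card_le_mul_card_kneserNbhd_succ [DecidableEq α] {G : Finset α} {R : Finset (Finset α)}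
    {k m : ℕ} (hR : R ⊆ G.powersetCard k) (hG : #G = k + m) (hkm : k < m) :
    m * #R ≤ (k + 1) * #(kneserNbhd G (k + 1) R) := by
  obtain ⟨l, rfl⟩ : ∃ l, m = l + 1 := ⟨m - 1, by lia⟩
  have hcount := card_mul_choose_le_card_kneserNbhd_mul_choose (a := k + 1) hR
  rw [hG, Nat.add_sub_cancel_left, Nat.add_sub_add_left] at hcount
  have hpos : 0 < l.choose k := Nat.choose_pos (by lia)
  refine Nat.le_of_mul_le_mul_right ?_ hpos
  calc (l + 1) * #R * l.choose k = #R * ((l + 1) * l.choose k) := by ring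
    _ = (k + 1) * (#R * (l + 1).choose (k + 1)) := by rw [Nat.add_one_mul_choose_eq]; ring
    _ ≤ (k + 1) * (#(kneserNbhd G (k + 1) R) * l.choose k) := Nat.mul_le_mul_left _ hcount
    _ = (k + 1) * #(kneserNbhd G (k + 1) R) * l.choose k := by ring

variable [LinearOrder α] {G : Finset α} {F R : Finset (Finset α)} {a k m t : ℕ} {s : α}

lemma IsShifted.memberSubfamily (hF : IsShifted G F) (s : α) :
    IsShifted (G.erase s) (F.memberSubfamily s) := by
  intro S hS j hj i hi hiS hij
  obtain ⟨hS, hsS⟩ := mem_memberSubfamily.1 hS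
  obtain ⟨his, hiG⟩ := mem_erase.1 hi
  have hsj : s ≠ j := fun h => hsS (h ▸ hj)
  have hshift := hF hS (mem_insert_of_mem hj) hiG (by simp only [mem_insert, his, hiS, or_self,
    not_false_eq_true]) hij
  rw [erase_insert_of_ne hsj, Finset.insert_comm] at hshift
  refine mem_memberSubfamily.2 ⟨hshift, fun h => ?_⟩
  exact (mem_insert.1 h).elim his.symm fun h => hsS (mem_of_mem_erase h)

lemma IsShifted.nonMemberSubfamily (hF : IsShifted G F) (s : α) :
    IsShifted (G.erase s) (F.nonMemberSubfamily s) := by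
  intro S hS j hj i hi hiS hij
  obtain ⟨hS, hsS⟩ := mem_nonMemberSubfamily.1 hS
  obtain ⟨his, hiG⟩ := mem_erase.1 hi
  refine mem_nonMemberSubfamily.2 ⟨hF hS hj hiG hiS hij, fun h => ?_⟩
  exact (mem_insert.1 h).elim his.symm fun h => hsS (mem_of_mem_erase h)

-- Shifting a common element `x` of `S` and `T` down to `s` removes only `x` from `S ∩ T`.
lemma IsShifted.tIntersecting_nonMemberSubfamily (hF : IsShifted G F) (hFG : F ⊆ G.powersetCard k)
    (hint : TIntersecting (t + 1) F) (hs : IsLeast (G : Set α) s) :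
    TIntersecting (t + 2) (F.nonMemberSubfamily s) := by
  intro S hS T hT
  obtain ⟨hS, hsS⟩ := mem_nonMemberSubfamily.1 hS
  obtain ⟨hT, hsT⟩ := mem_nonMemberSubfamily.1 hT
  obtain ⟨x, hx⟩ := card_pos.1 (Nat.lt_of_succ_le (hint hS hT) |>.pos)
  obtain ⟨hxS, -⟩ := mem_inter.1 hx
  have hsx : s < x := lt_of_le_of_ne (hs.2 ((mem_powersetCard.1 (hFG hS)).1 hxS))
    fun h => hsS (h ▸ hxS)
  have hcard := hint (hF hS hxS hs.1 hsS hsx) hT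
  rw [insert_inter_of_notMem hsT, erase_inter, card_erase_of_mem hx] at hcard
  lia

lemma mul_card_le_of_pred_mul_card_le {r c : ℕ} (ham : a + 1 < m)
    (h : (m - 1) * r ≤ (a + 1) * c) : m * r ≤ (a + 2) * c := by
  obtain ⟨d, rfl⟩ : ∃ d, m = a + 2 + d := ⟨m - (a + 2), by lia⟩
  rw [show a + 2 + d - 1 = a + 1 + d by lia] at h
  refine Nat.le_of_mul_le_mul_left (?_ : (a + 1) * _ ≤ (a + 1) * _) a.succ_pos
  nlinarith [Nat.mul_le_mul_left (a + 2) h, Nat.zero_le (d * r)]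

-- For the complements of the members this is Katona's intersecting shadow theorem.
lemma IsShifted.mul_card_le_mul_card_kneserNbhd (hshift : IsShifted G R)
    (hR : R ⊆ G.powersetCard k) (hint : TIntersecting t R) (hG : #G = k + m) (hat : a + t = k)
    (ham : a < m) : m * #R ≤ (a + 1) * #(kneserNbhd G (a + 1) R) := by
  induction G using Finset.strongInduction generalizing R a k m t with | _ G ih =>
  obtain _ | t := t
  · obtain rfl : a = k := hat
    exact mul_card_le_mul_card_kneserNbhd_succ hR hG ham
  obtain ⟨l, rfl⟩ : ∃ l, k = l + 1 := ⟨a + t, hat.symm⟩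
  have hne : G.Nonempty := card_pos.1 (by lia)
  obtain ⟨s, hs⟩ : ∃ s, IsLeast (G : Set α) s := ⟨_, isLeast_min' G hne⟩
  have hcard : #(G.erase s) = l + m := by rw [card_erase_of_mem hs.1]; lia
  have hmem : m * #(R.memberSubfamily s) ≤
      (a + 1) * #(kneserNbhd (G.erase s) (a + 1) (R.memberSubfamily s)) :=
    ih _ (erase_ssubset hs.1) (hshift.memberSubfamily s)
      (memberSubfamily_subset_powersetCard_s1 hR s) (hint.memberSubfamily s) hcard (by lia) ham
  have hint₀ := hshift.tIntersecting_nonMemberSubfamily hR hint hs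
  have hR₀ := nonMemberSubfamily_subset_powersetCard_s1 hR s
  have hnonMem : m * #(R.nonMemberSubfamily s) ≤
      (a + 1) * #(kneserNbhd (G.erase s) a (R.nonMemberSubfamily s)) := by
    obtain _ | a := a
    · have hempty : R.nonMemberSubfamily s = ∅ := eq_empty_of_forall_notMem fun S hS => by
        have hSS := hint₀ hS hS
        rw [inter_self, (mem_powersetCard.1 (hR₀ hS)).2] at hSS
        lia
      rw [hempty, card_empty, mul_zero]
      exact Nat.zero_le _
    · exact mul_card_le_of_pred_mul_card_le ham (ih _ (erase_ssubset hs.1)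
        (hshift.nonMemberSubfamily s) hR₀ hint₀ (by lia) (by lia) (by lia))
  calc m * #R = m * #(R.memberSubfamily s) + m * #(R.nonMemberSubfamily s) := by
        rw [← mul_add, card_memberSubfamily_add_card_nonMemberSubfamily]
    _ ≤ (a + 1) * (#(kneserNbhd (G.erase s) (a + 1) (R.memberSubfamily s)) +
          #(kneserNbhd (G.erase s) a (R.nonMemberSubfamily s))) := by
        rw [mul_add]; exact add_le_add hmem hnonMem
    _ ≤ (a + 1) * #(kneserNbhd G (a + 1) R) :=
        Nat.mul_le_mul_left _ (card_kneserNbhd_add_card_kneserNbhd_le hs.1 a R)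

lemma IsShifted.card_le_franklBound_two (hshift : IsShifted G F) (hF : F ⊆ G.powersetCard k)
    (hint : (F : Set (Finset α)).Intersecting) (hs : IsLeast (G : Set α) s) (hk : 2 ≤ k)
    (hkG : 2 * k < #G) (hlower : (#G - 3).choose (#G - k - 1) ≤ #(F.nonMemberSubfamily s)) :
    (#F : ℤ) ≤ franklBound (#G) k 2 := by
  obtain ⟨l, rfl⟩ : ∃ l, k = l + 2 := ⟨k - 2, by lia⟩
  obtain ⟨d, hd⟩ : ∃ d, #G = 2 * l + 5 + d := ⟨#G - (2 * l + 5), by lia⟩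
  have hcard : #(G.erase s) = l + 2 + (l + 2 + d) := by rw [card_erase_of_mem hs.1]; lia
  have hkatona := (hshift.nonMemberSubfamily s).mul_card_le_mul_card_kneserNbhd
    (nonMemberSubfamily_subset_powersetCard_s1 hF s) (hshift.tIntersecting_nonMemberSubfamily hF
      (tIntersecting_one_of_intersecting hint) hs) hcard rfl (by lia)
  have hcross := ((crossIntersecting_self_iff.2 hint).memberSubfamily_nonMemberSubfamily
    s).card_add_card_kneserNbhd_le (memberSubfamily_subset_powersetCard_s1 hF s)
  have hsplit := card_memberSubfamily_add_card_nonMemberSubfamily s F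
  have pascal₁ := Nat.choose_succ_succ' (2 * l + 2 + d + 1) l
  have pascal₂ := Nat.choose_succ_succ' (2 * l + 2 + d) l
  have ratio := Nat.choose_succ_right_eq (2 * l + 2 + d) l
  have symm := Nat.choose_symm_of_eq_add (show 2 * l + 2 + d = l + (l + 2 + d) by lia)
  rw [show 2 * l + 2 + d - l = l + 2 + d by lia] at ratio
  rw [show l + 2 + (l + 2 + d) = 2 * l + 2 + d + 1 + 1 by lia] at hcard
  rw [hcard, pascal₁, pascal₂] at hcross
  rw [show #G - 3 = 2 * l + 2 + d by lia, show #G - (l + 2) - 1 = l + 2 + d by lia,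
    ← symm] at hlower
  rw [franklBound_two hk (by lia), show #G - 2 = 2 * l + 2 + d + 1 by lia,
    show #G - 3 = 2 * l + 2 + d by lia, show #G - (l + 2) - 1 = l + 2 + d by lia, ← symm,
    Nat.add_sub_cancel]
  have hcross_mul := Nat.mul_le_mul_left (l + 1) hcross
  have hlower_mul := Nat.mul_le_mul_left (d + 1) hlower
  norm_cast
  refine Nat.le_of_mul_le_mul_left (?_ : (l + 1) * _ ≤ (l + 1) * _) l.succ_pos
  rw [← hsplit]
  nlinarith

end Shifted

section Compression

open scoped FinsetFamily

variable {α : Type*} [DecidableEq α] {G S T : Finset α} {F : Finset (Finset α)} {k : ℕ} {i j l : α}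

lemma compress_singleton (i j : α) (S : Finset α) :
    UV.compress {i} {j} S = if i ∉ S ∧ j ∈ S then insert i (S.erase j) else S := by
  simp only [UV.compress, disjoint_singleton_left, singleton_subset_iff, sup_eq_union]
  split_ifs with h
  · have hij : i ≠ j := fun hij => h.1 (hij ▸ h.2)
    rw [union_comm, ← insert_eq, sdiff_singleton_eq_erase, erase_insert_of_ne hij]
  · rfl

lemma compress_singleton_of_mem (hi : i ∉ S) (hj : j ∈ S) :
    UV.compress {i} {j} S = insert i (S.erase j) := by
  rw [compress_singleton, if_pos ⟨hi, hj⟩]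

lemma notMem_and_mem_of_compress_ne (h : UV.compress {i} {j} S ≠ S) : i ∉ S ∧ j ∈ S := by
  by_contra hij
  exact h (by rw [compress_singleton, if_neg hij])

lemma sum_compression {β M : Type*} [GeneralizedBooleanAlgebra β] [DecidableEq β]
    [DecidableRel (α := β) Disjoint] [DecidableLE β] [AddCommMonoid M] (u v : β) (s : Finset β)
    (f : β → M) : ∑ b ∈ 𝓒 u v s, f b =
      ∑ b ∈ s, if UV.compress u v b ∈ s then f b else f (UV.compress u v b) := by
  rw [UV.compression, sum_union UV.compress_disjoint, filter_image,
    sum_image UV.compress_injOn, sum_ite]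

lemma card_nonMemberSubfamily_le_compression (hl : l ≠ i) (j : α) (F : Finset (Finset α)) :
    #(F.nonMemberSubfamily l) ≤ #((𝓒 {i} {j} F).nonMemberSubfamily l) := by
  rw [nonMemberSubfamily, nonMemberSubfamily, card_filter, card_filter, sum_compression]
  refine sum_le_sum fun S _ => ?_
  rw [compress_singleton]
  split_ifs <;> simp_all

lemma nonMember_nonMember_subset_nonMember_compression (i j : α) (F : Finset (Finset α)) :
    (F.nonMemberSubfamily j).nonMemberSubfamily i ⊆ (𝓒 {i} {j} F).nonMemberSubfamily i := by
  intro S hS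
  obtain ⟨hS, hiS⟩ := mem_nonMemberSubfamily.1 hS
  obtain ⟨hS, hjS⟩ := mem_nonMemberSubfamily.1 hS
  have hfix : UV.compress {i} {j} S = S := by
    rw [compress_singleton, if_neg fun h => hjS h.2]
  exact mem_nonMemberSubfamily.2 ⟨UV.mem_compression.2 (.inl ⟨hS, hfix.symm ▸ hS⟩), hiS⟩

lemma compression_subset_powersetCard_s1 (hF : F ⊆ G.powersetCard k) (hi : i ∈ G) (j : α) :
    𝓒 {i} {j} F ⊆ G.powersetCard k := by
  intro T hT
  obtain ⟨hT, -⟩ | ⟨-, S, hS, rfl⟩ := UV.mem_compression.1 hT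
  · exact hF hT
  obtain ⟨hSG, hSc⟩ := mem_powersetCard.1 (hF hS)
  refine mem_powersetCard.2 ⟨?_, (UV.card_compress (by simp only [card_singleton]) S).trans hSc⟩
  rw [compress_singleton]
  split_ifs
  · exact insert_subset hi ((erase_subset j S).trans hSG)
  · exact hSG

-- If `T` misses `i` but contains `j`, use that its compression, which lies in `F`, meets `S`.
lemma not_disjoint_compress_of_intersecting (hF : (F : Set (Finset α)).Intersecting) (hS : S ∈ F)
    (hS' : UV.compress {i} {j} S ∉ F) (hT : T ∈ F) (hT' : UV.compress {i} {j} T ∈ F) :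
    ¬Disjoint (UV.compress {i} {j} S) T := by
  obtain ⟨hiS, hjS⟩ := notMem_and_mem_of_compress_ne fun h => hS' (h.symm ▸ hS)
  rw [compress_singleton_of_mem hiS hjS, disjoint_insert_left]
  rintro ⟨hiT, hdisj⟩
  by_cases hjT : j ∈ T
  · rw [compress_singleton_of_mem hiT hjT] at hT'
    exact hF hS hT' (disjoint_insert_right.2 ⟨hiS, disjoint_erase_comm.1 hdisj⟩)
  · rw [disjoint_erase_comm, erase_eq_of_notMem hjT] at hdisj
    exact hF hS hT hdisj

lemma intersecting_compression_singleton (hF : (F : Set (Finset α)).Intersecting) (i j : α) :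
    (𝓒 {i} {j} F : Set (Finset α)).Intersecting := by
  intro A hA B hB
  obtain ⟨hA, hA'⟩ | ⟨hA', S, hS, rfl⟩ := UV.mem_compression.1 (mem_coe.1 hA) <;>
    obtain ⟨hB, hB'⟩ | ⟨hB', T, hT, rfl⟩ := UV.mem_compression.1 (mem_coe.1 hB)
  · exact hF hA hB
  · rw [disjoint_comm]
    exact not_disjoint_compress_of_intersecting hF hT hB' hA hA'
  · exact not_disjoint_compress_of_intersecting hF hS hA' hB hB'
  · obtain ⟨hiS, hjS⟩ := notMem_and_mem_of_compress_ne fun h => hA' (h.symm ▸ hS)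
    obtain ⟨hiT, hjT⟩ := notMem_and_mem_of_compress_ne fun h => hB' (h.symm ▸ hT)
    rw [compress_singleton_of_mem hiS hjS, compress_singleton_of_mem hiT hjT]
    exact not_disjoint_iff.2 ⟨i, mem_insert_self .., mem_insert_self ..⟩

end Compression

section Diversity

open scoped FinsetFamily

variable {α : Type*} {G S : Finset α} {F : Finset (Finset α)} {k u : ℕ} {i j : α}

/-- The sum of the positions in `G` of the elements of the members of `F`; it decreases under
every proper compression towards smaller elements. -/
def shiftWeight [LinearOrder α] (G : Finset α) (F : Finset (Finset α)) : ℕ :=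
  ∑ S ∈ F, ∑ x ∈ S, #{y ∈ G | y < x}

lemma sum_compress_lt_sum [LinearOrder α] (hi : i ∈ G) (hij : i < j) (hiS : i ∉ S) (hjS : j ∈ S) :
    ∑ x ∈ UV.compress {i} {j} S, #{y ∈ G | y < x} < ∑ x ∈ S, #{y ∈ G | y < x} := by
  have hlt : #{y ∈ G | y < i} < #{y ∈ G | y < j} := card_lt_card <| by
    refine (ssubset_iff_of_subset (monotone_filter_right G fun y _ hy => hy.trans hij)).2
      ⟨i, mem_filter.2 ⟨hi, hij⟩, fun h => (mem_filter.1 h).2.false⟩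
  rw [compress_singleton_of_mem hiS hjS, sum_insert fun h => hiS (mem_of_mem_erase h),
    ← add_sum_erase S _ hjS]
  exact Nat.add_lt_add_right hlt _

lemma shiftWeight_compression_lt [LinearOrder α] (hi : i ∈ G) (hij : i < j) (hS : S ∈ F)
    (hS' : UV.compress {i} {j} S ∉ F) : shiftWeight G (𝓒 {i} {j} F) < shiftWeight G F := by
  have hlt {T : Finset α} (hT : T ∈ F) (hT' : UV.compress {i} {j} T ∉ F) :
      ∑ x ∈ UV.compress {i} {j} T, #{y ∈ G | y < x} < ∑ x ∈ T, #{y ∈ G | y < x} :=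
    have hmoved := notMem_and_mem_of_compress_ne fun h => hT' (h.symm ▸ hT)
    sum_compress_lt_sum hi hij hmoved.1 hmoved.2
  rw [shiftWeight, shiftWeight, sum_compression]
  refine sum_lt_sum (fun T hT => ?_) ⟨S, hS, by rw [if_neg hS']; exact hlt hS hS'⟩
  split_ifs with hT'
  · exact le_rfl
  · exact (hlt hT hT').le

lemma exists_compress_notMem_of_not_isShifted [LinearOrder α] (h : ¬IsShifted G F) :
    ∃ S ∈ F, ∃ j ∈ S, ∃ i ∈ G, i < j ∧ UV.compress {i} {j} S ∉ F := by
  simp only [IsShifted] at h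
  push Not at h
  obtain ⟨S, hS, j, hj, i, hi, hiS, hij, hnot⟩ := h
  exact ⟨S, hS, j, hj, i, hi, hij, (compress_singleton_of_mem hiS hj).symm ▸ hnot⟩

lemma card_le_franklBound_of_choose_le_card_nonMemberSubfamily [LinearOrder α]
    (hF : F ⊆ G.powersetCard k) (hint : (F : Set (Finset α)).Intersecting) (hkG : 2 * k < #G)
    (hu : 3 ≤ u) (huk : u ≤ k)
    (hlower : ∀ i ∈ G, (#G - 3).choose (#G - k - 1) ≤ #(F.nonMemberSubfamily i)) :
    (#F : ℤ) ≤ franklBound (#G) k u := by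
  induction hw : shiftWeight G F using Nat.strong_induction_on generalizing F with | _ w ih =>
  subst hw
  have hmono := franklBound_mono hkG le_rfl (by lia : 2 ≤ u) huk
  by_cases hshift : IsShifted G F
  · have hleast := isLeast_min' G (card_pos.1 (by lia))
    exact (hshift.card_le_franklBound_two hF hint hleast (by lia) hkG
      (hlower _ hleast.1)).trans hmono
  obtain ⟨S, hS, j, hjS, i, hi, hij, hnot⟩ := exists_compress_notMem_of_not_isShifted hshift
  have hj : j ∈ G := (mem_powersetCard.1 (hF hS)).1 hjS
  have hF' := compression_subset_powersetCard_s1 hF hi j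
  have hint' := intersecting_compression_singleton hint i j
  by_cases hlarge : (#G - 3).choose (#G - k - 1) ≤ #((𝓒 {i} {j} F).nonMemberSubfamily i)
  · rw [← UV.card_compression {i} {j} F]
    refine ih _ (shiftWeight_compression_lt hi hij hS hnot) hF' hint' (fun l hl => ?_) rfl
    obtain rfl | hli := eq_or_ne l i
    · exact hlarge
    · exact (hlower l hl).trans (card_nonMemberSubfamily_le_compression hli j F)
  obtain hmid | hsmall := le_total ((#G - u - 1).choose (#G - k - 1))
    #((𝓒 {i} {j} F).nonMemberSubfamily i)
  · rw [← UV.card_compression {i} {j} F]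
    exact card_le_franklBound_of_card_nonMemberSubfamily_le hF' hint' hi hkG hu huk hmid
      (not_le.1 hlarge).le
  · have hupper : #((F.nonMemberSubfamily j).nonMemberSubfamily i) ≤
        (#G - 4).choose (#G - k - 1) :=
      (card_le_card (nonMember_nonMember_subset_nonMember_compression i j F)).trans
        (hsmall.trans (Nat.choose_le_choose _ (by lia)))
    exact (card_le_franklBound_two_of_card_nonMember_nonMember_le hF hint hi hj hij.ne (by lia)
      hkG (hlower i hi) (hlower j hj) hupper).trans hmono

lemma card_le_franklBound_of_le_card_nonMemberSubfamily [DecidableEq α]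
    (hF : F ⊆ G.powersetCard k) (hint : (F : Set (Finset α)).Intersecting) (hkG : 2 * k < #G)
    (hu : 3 ≤ u) (huk : u ≤ k)
    (hlower : ∀ i ∈ G, (#G - u - 1).choose (#G - k - 1) ≤ #(F.nonMemberSubfamily i)) :
    (#F : ℤ) ≤ franklBound (#G) k u := by
  by_cases hsmall : ∃ i ∈ G, #(F.nonMemberSubfamily i) ≤ (#G - 3).choose (#G - k - 1)
  · obtain ⟨i, hi, hupper⟩ := hsmall
    exact card_le_franklBound_of_card_nonMemberSubfamily_le hF hint hi hkG hu huk (hlower i hi)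
      hupper
  push Not at hsmall
  classical
  let order : LinearOrder α := linearOrderOfSTO WellOrderingRel
  obtain rfl : ‹DecidableEq α› = order.toDecidableEq := Subsingleton.elim _ _
  exact card_le_franklBound_of_choose_le_card_nonMemberSubfamily hF hint hkG hu huk
    fun i hi => (hsmall i hi).le

end Diversity

theorem frankl_bounded_degree_general {α : Type*} [DecidableEq α] {G : Finset α}
    {F : Finset (Finset α)} {k u : ℕ} (hkG : 2 * k < #G) (hu : 3 ≤ u) (huk : u ≤ k)
    (hF : F ⊆ G.powersetCard k) (hint : (F : Set (Finset α)).Intersecting)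
    (hdeg : ∀ i ∈ G, (#{S ∈ F | i ∈ S} : ℤ) ≤
      (#G - 1).choose (k - 1) - (#G - u - 1).choose (k - 1)) :
    (#F : ℤ) ≤ franklBound (#G) k u := by
  by_contra! hlarge
  refine hlarge.not_ge
    (card_le_franklBound_of_le_card_nonMemberSubfamily hF hint hkG hu huk fun i hi => ?_)
  have hsplit : #{S ∈ F | i ∈ S} + #(F.nonMemberSubfamily i) = #F :=
    card_filter_add_card_filter_not (i ∈ ·)
  have hdeg_i := hdeg i hi
  rw [franklBound] at hlarge
  lia

/-- Frankl's theorem: if `F ⊆ C([n],k)` is intersecting, `n > 2k > 0`, and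
`Δ(F) ≤ C(n-1,k-1) - C(n-u-1,k-1)` for some integer `3 ≤ u ≤ k`, then
`|F| ≤ C(n-1,k-1) + C(n-u-1,n-k-1) - C(n-u-1,k-1)`. -/
theorem frankl_bounded_degree (n k u : ℕ) (hk : 0 < k) (hnk : 2 * k < n)
    (hu3 : 3 ≤ u) (huk : u ≤ k)
    (F : Finset (Finset ℕ)) (hF : F ⊆ (Finset.Icc 1 n).powersetCard k)
    (hint : ∀ A ∈ F, ∀ B ∈ F, (A ∩ B).Nonempty)
    (hdeg : (maxDeg n F : ℤ) ≤
      ((n - 1).choose (k - 1) : ℤ) - ((n - u - 1).choose (k - 1) : ℤ)) :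
    (F.card : ℤ) ≤ ((n - 1).choose (k - 1) : ℤ)
      + ((n - u - 1).choose (n - k - 1) : ℤ) - ((n - u - 1).choose (k - 1) : ℤ) := by
  have hcard : #(Icc 1 n) = n := by rw [Nat.card_Icc, Nat.add_sub_cancel]
  rw [maxDeg] at hdeg
  rw [← hcard] at hnk ⊢
  exact frankl_bounded_degree_general hnk hu3 huk hF
    (fun A hA B hB => not_disjoint_iff_nonempty_inter.2 (hint A hA B hB))
    fun i hi => (Nat.cast_le.2 (le_sup (f := deg F) hi)).trans (hcard.symm ▸ hdeg)
end
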